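/- For nonnegative integers i, j, k, the identity ∑ q^{T_s + T_{ab} + T_{ac} + T_{bc-1}} (1 - q^a + q^{a+bc}) / ((q)_a (q)_b (q)_c (q)_{ab} (q)_{ac} (q)_{bc}) = q^{T_i + T_j + T_k} / ((q)_i (q)_j (q)_k) holds as formal power series in q, where the sum is over nonnegative integers a, b, c, ab, ac, bc with i = a + ab + ac, j = b + ab + bc, k = c + ac + bc, and s = a + b + c + ab + ac + bc. -/

import Mathlib

open PowerSeries Finset

/-- Triangular number `T n = n(n+1)/2` (so `tri (bc - 1) = 0` when `bc = 0`,
matching the convention `T_{-1} = 0` via truncated subtraction). -/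
def tri (n : ℕ) : ℕ := n * (n + 1) / 2

/-- The `q`-Pochhammer symbol `(q)_n = ∏_{j=1}^n (1 - q^j)` as a formal power
series in `q` over `ℚ`. -/
noncomputable def qPoch (n : ℕ) : PowerSeries ℚ :=
  ∏ j ∈ Finset.range n, (1 - (PowerSeries.X : PowerSeries ℚ) ^ (j + 1))

section FieldPart
variable {K : Type*} [Field K]

/-- `pp q u n = ∏_{l<n} (1 - u q^l)`. -/
def pp (q u : K) (n : ℕ) : K := ∏ l ∈ Finset.range n, (1 - u * q ^ l)

theorem pp_succ (q u : K) (n : ℕ) : pp q u (n + 1) = pp q u n * (1 - u * q ^ n) := by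
  simp [pp, Finset.prod_range_succ]

theorem pp_zero (q u : K) : pp q u 0 = 1 := by simp [pp]

theorem pp_ne {q u : K} (hu : ∀ n : ℕ, 1 - u * q ^ n ≠ 0) (n : ℕ) : pp q u n ≠ 0 :=
  Finset.prod_ne_zero_iff.2 fun l _ => hu l

/-- Summand, with `α = j - z`, `β = k - z`. -/
def FF (q u : K) (α β z : ℕ) : K :=
  q ^ (α * β) * pp q q (α + z) * pp q q (β + z) * pp q u α * pp q u β * (1 - u * q ^ (α + β)) /
    (pp q q α * pp q q β * pp q q z * pp q u (α + β + z + 1))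

/-- WZ companion. -/
def HH (q u : K) (α β z : ℕ) : K :=
  q ^ (α * β) * pp q q (α + z) * pp q q (β + z) * pp q u α * pp q u β * (1 - q ^ β) /
    (pp q q α * pp q q β * pp q q z * pp q u (α + β + z + 1))

theorem wz_zero (q u : K) (hq : ∀ n : ℕ, 1 - q * q ^ n ≠ 0) (hu : ∀ n : ℕ, 1 - u * q ^ n ≠ 0)
    (α β : ℕ) : FF q u (α + 1) β 0 - FF q u α β 0 = - HH q u α β 0 := by
  have e1 : α + 1 + β + 0 + 1 = (α + β + 0 + 1) + 1 := by ring
  have h1 := pp_ne hq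
  have h2 := pp_ne hu
  simp only [FF, HH, e1, add_zero, pp_succ, pp_zero]
  have a1 := h1 α
  have a2 := h1 β
  have a4 := h2 (α + β)
  have b1 := hq α
  have b2 := hu (α + β)
  have b3 := hu (α + β + 1)
  generalize pp q q α = x1 at *
  generalize pp q q β = x2 at *
  generalize pp q u (α + β) = x3 at *
  generalize pp q u α = x4 at *
  generalize pp q u β = x5 at *
  simp only [pow_add, pow_mul, add_mul, one_mul, pow_one, mul_assoc] at *
  generalize (q ^ α) ^ β = y0 at *
  generalize q ^ α = A at *
  generalize q ^ β = B at *
  obtain ⟨d1, hd1⟩ : ∃ d, d = 1 - q * A := ⟨_, rfl⟩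
  simp only [← hd1] at b1 ⊢
  obtain ⟨d2, hd2⟩ : ∃ d, d = 1 - u * (A * B) := ⟨_, rfl⟩
  simp only [← hd2] at b2 ⊢
  obtain ⟨d3, hd3⟩ : ∃ d, d = 1 - u * (A * (B * q)) := ⟨_, rfl⟩
  simp only [← hd3] at b3 ⊢
  field_simp
  subst hd1 hd2 hd3
  ring

theorem wz_succ (q u : K) (hq : ∀ n : ℕ, 1 - q * q ^ n ≠ 0) (hu : ∀ n : ℕ, 1 - u * q ^ n ≠ 0)
    (α β z : ℕ) : FF q u (α + 1) β (z + 1) - FF q u α β (z + 1) =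
      HH q u (α + 1) (β + 1) z - HH q u α β (z + 1) := by
  have h1 := pp_ne hq
  have h2 := pp_ne hu
  have e1 : α + 1 + β + (z + 1) + 1 = (α + β + z + 1) + 1 + 1 := by ring
  have e2 : α + β + (z + 1) + 1 = (α + β + z + 1) + 1 := by ring
  have e3 : α + 1 + (β + 1) + z + 1 = (α + β + z + 1) + 1 + 1 := by ring
  have e4 : α + 1 + (z + 1) = (α + z) + 1 + 1 := by ring
  have e5 : α + (z + 1) = (α + z) + 1 := by ring
  have e6 : β + (z + 1) = (β + z) + 1 := by ring
  have e7 : α + 1 + z = (α + z) + 1 := by ring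
  have e8 : β + 1 + z = (β + z) + 1 := by ring
  simp only [FF, HH, e1, e2, e3, e4, e5, e6, e7, e8]
  simp only [pp_succ]
  have a1 := h1 α
  have a2 := h1 β
  have a3 := h1 z
  have a4 := h2 (α + β + z)
  have b1 := hq α
  have b2 := hq β
  have b3 := hq z
  have b4 := hu (α + β + z)
  have b5 := hu (α + β + z + 1)
  have b6 := hu (α + β + z + 1 + 1)
  generalize pp q q α = x1 at *
  generalize pp q q β = x2 at *
  generalize pp q q z = x3 at *
  generalize pp q u (α + β + z) = x4 at *
  generalize pp q u α = x5 at *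
  generalize pp q u β = x6 at *
  generalize pp q q (α + z) = x7 at *
  generalize pp q q (β + z) = x8 at *
  simp only [pow_add, pow_mul, add_mul, mul_add, one_mul, mul_one, pow_one, mul_assoc,
    pow_two] at *
  generalize (q ^ α) ^ β = y0 at *
  generalize q ^ α = A at *
  generalize q ^ β = B at *
  generalize q ^ z = w at *
  obtain ⟨d1, hd1⟩ : ∃ d, d = 1 - q * A := ⟨_, rfl⟩
  simp only [← hd1] at b1 ⊢
  obtain ⟨d2, hd2⟩ : ∃ d, d = 1 - q * B := ⟨_, rfl⟩
  simp only [← hd2] at b2 ⊢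
  obtain ⟨d3, hd3⟩ : ∃ d, d = 1 - q * w := ⟨_, rfl⟩
  simp only [← hd3] at b3 ⊢
  obtain ⟨d4, hd4⟩ : ∃ d, d = 1 - u * (A * (B * w)) := ⟨_, rfl⟩
  simp only [← hd4] at b4 ⊢
  obtain ⟨d5, hd5⟩ : ∃ d, d = 1 - u * (A * (B * (w * q))) := ⟨_, rfl⟩
  simp only [← hd5] at b5 ⊢
  obtain ⟨d6, hd6⟩ : ∃ d, d = 1 - u * (A * (B * (w * (q * q)))) := ⟨_, rfl⟩
  simp only [← hd6] at b6 ⊢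
  field_simp
  subst hd1 hd2 hd3 hd4 hd5 hd6
  ring

theorem wz_partial (q u : K) (hq : ∀ n : ℕ, 1 - q * q ^ n ≠ 0) (hu : ∀ n : ℕ, 1 - u * q ^ n ≠ 0)
    (n α β : ℕ) :
    ∑ z ∈ Finset.range (n + 1), (FF q u (α + n + 1 - z) (β + n - z) z
      - FF q u (α + n - z) (β + n - z) z) = - HH q u α β n := by
  induction n generalizing α β with
  | zero => simpa using wz_zero q u hq hu α β
  | succ n ih =>
    rw [Finset.sum_range_succ]
    have := ih (α + 1) (β + 1)
    have e1 : α + (n + 1) + 1 = α + 1 + n + 1 := by ring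
    have e2 : α + (n + 1) = α + 1 + n := by ring
    have e3 : β + (n + 1) = β + 1 + n := by ring
    rw [e1, e2, e3, this]
    have e4 : α + 1 + n + 1 - (n + 1) = α + 1 := by omega
    have e5 : α + 1 + n - (n + 1) = α := by omega
    have e6 : β + 1 + n - (n + 1) = β := by omega
    rw [e4, e5, e6, wz_succ q u hq hu]
    ring

theorem FF_sum (q u : K) (hq : ∀ n : ℕ, 1 - q * q ^ n ≠ 0) (hu : ∀ n : ℕ, 1 - u * q ^ n ≠ 0)
    (j k : ℕ) : ∑ z ∈ Finset.range (min j k + 1), FF q u (j - z) (k - z) z = 1 := by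
  have h1 := pp_ne hq
  have h2 := pp_ne hu
  induction j with
  | zero =>
    have a1 := h1 k
    have a2 := h2 k
    have a3 := hu k
    simp [FF, pp_succ, pp_zero]
    field_simp
  | succ j ih =>
    rcases le_or_gt k j with h | h
    · obtain ⟨α, rfl⟩ := Nat.exists_eq_add_of_le' h
      have := wz_partial q u hq hu k α 0
      rw [min_eq_right (by omega)] at ih ⊢
      rw [Finset.sum_sub_distrib] at this
      simp only [zero_add] at this
      rw [ih] at this
      have e : HH q u α 0 k = 0 := by simp [HH]
      rw [e] at this
      linear_combination this
    · obtain ⟨β, rfl⟩ := Nat.exists_eq_add_of_le' (Nat.succ_le_of_lt h)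
      have := wz_partial q u hq hu j 0 (β + 1)
      rw [min_eq_left (by omega)] at ih ⊢
      rw [Finset.sum_sub_distrib] at this
      simp only [zero_add] at this
      have e0 : β + 1 + j = β + (j + 1) := by ring
      rw [e0, ih] at this
      rw [Finset.sum_range_succ]
      have e : HH q u 0 (β + 1) j = FF q u (j + 1 - (j + 1)) (β + j.succ - (j + 1)) (j + 1) := by
        have e1 : β + (j + 1) - (j + 1) = β := by omega
        have e4 : β + 1 + j = β + (j + 1) := by ring
        have a1 := h1 j
        have a2 := h1 β
        have a4 := hq j
        have a5 := hq β
        simp only [Nat.succ_eq_add_one, HH, FF, e1, e4, Nat.sub_self, zero_add, pp_zero,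
          zero_mul, pow_zero]
        rw [pp_succ q q j, pp_succ q q β, pp_succ q u β, pow_succ' q β]
        have a6 := h2 (β + (j + 1) + 1)
        obtain ⟨d, hd⟩ : ∃ d, d = 1 - q * q ^ β := ⟨_, rfl⟩
        rw [← hd] at a5 ⊢
        field_simp
      simp only [Nat.succ_eq_add_one] at e ⊢
      rw [← e]
      linear_combination this

end FieldPart

section SeriesPart

/-- Inverse `q`-Pochhammer symbol. -/
noncomputable def iq (n : ℕ) : PowerSeries ℚ := (qPoch n)⁻¹

/-- the series `q`. -/
noncomputable abbrev qq : PowerSeries ℚ := PowerSeries.X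

theorem qPoch_succ (n : ℕ) : qPoch (n + 1) = qPoch n * (1 - qq ^ (n + 1)) := by
  simp [qPoch, Finset.prod_range_succ]

theorem qPoch_const (n : ℕ) : PowerSeries.constantCoeff (qPoch n) = 1 := by
  simp [qPoch, map_prod]

theorem qPoch_iq (n : ℕ) : qPoch n * iq n = 1 :=
  PowerSeries.mul_inv_cancel _ (by rw [qPoch_const]; exact one_ne_zero)

theorem iq_succ (n : ℕ) : iq n = iq (n + 1) * (1 - qq ^ (n + 1)) := by
  have h1 := qPoch_iq n
  have h2 := qPoch_iq (n + 1)
  rw [qPoch_succ] at h2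
  linear_combination iq (n + 1) * (1 - qq ^ (n + 1)) * h1 - iq n * h2

theorem iq_zero : iq 0 = 1 := by simp [iq, qPoch]

theorem iq_mul6 (a b c x y z : ℕ) :
    (qPoch a * qPoch b * qPoch c * qPoch x * qPoch y * qPoch z)⁻¹ =
      iq a * iq b * iq c * iq x * iq y * iq z := by
  simp only [PowerSeries.mul_inv_rev, iq]; ring

theorem iq_mul3 (a b c : ℕ) :
    (qPoch a * qPoch b * qPoch c)⁻¹ = iq a * iq b * iq c := by
  simp only [PowerSeries.mul_inv_rev, iq]; ring

theorem two_tri (n : ℕ) : 2 * tri n = n * (n + 1) :=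
  Nat.mul_div_cancel' (Nat.even_mul_succ_self n).two_dvd

theorem tri_succ (n : ℕ) : tri (n + 1) = tri n + (n + 1) := by
  have h1 := two_tri n
  have h2 := two_tri (n + 1)
  nlinarith

theorem tri_zero : tri 0 = 0 := rfl

theorem tri_add (a m : ℕ) : tri (a + m) = tri a + tri m + a * m := by
  have h1 := two_tri a
  have h2 := two_tri m
  have h3 := two_tri (a + m)
  nlinarith

/-- `(-t q^{m+1})_∞` -/
noncomputable def EE (m : ℕ) : PowerSeries (PowerSeries ℚ) :=
  PowerSeries.mk fun n => qq ^ (tri n + m * n) * iq n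

/-- `(-t q)_n` -/
noncomputable def PP (n : ℕ) : PowerSeries (PowerSeries ℚ) :=
  ∏ l ∈ Finset.range n, (1 + PowerSeries.X * PowerSeries.C (qq ^ (l + 1)))

theorem PP_succ (n : ℕ) :
    PP (n + 1) = PP n * (1 + PowerSeries.X * PowerSeries.C (qq ^ (n + 1))) := by
  simp [PP, Finset.prod_range_succ]

theorem EE_succ (m : ℕ) :
    EE m = (1 + PowerSeries.X * PowerSeries.C (qq ^ (m + 1))) * EE (m + 1) := by
  ext1 n
  rw [add_mul, one_mul, map_add, mul_assoc]
  cases n with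
  | zero => simp [EE, tri_zero]
  | succ n =>
    rw [PowerSeries.coeff_succ_X_mul, PowerSeries.coeff_C_mul]
    simp only [EE, PowerSeries.coeff_mk]
    rw [iq_succ n, tri_succ]
    ring

theorem PP_EE (m : ℕ) : PP m * EE m = EE 0 := by
  induction m with
  | zero => simp [PP]
  | succ m ih => rw [← ih, PP_succ, EE_succ m]; ring

theorem coeff_PP_of_lt (J x : ℕ) (h : J < x) : PowerSeries.coeff x (PP J) = 0 := by
  induction J generalizing x with
  | zero => simp [PP, PowerSeries.coeff_one]; omega
  | succ J ih =>
    obtain ⟨x, rfl⟩ : ∃ y, x = y + 1 := ⟨x - 1, by omega⟩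
    have : PP (J + 1) = PP J + PowerSeries.X * (PowerSeries.C (qq ^ (J + 1)) * PP J) := by
      rw [PP_succ]; ring
    rw [this, map_add, PowerSeries.coeff_succ_X_mul, PowerSeries.coeff_C_mul, ih _ (by omega),
      ih _ (by omega)]
    simp

theorem coeff_PP (J b x : ℕ) (h : J = b + x) :
    iq J * PowerSeries.coeff x (PP J) = qq ^ tri x * iq x * iq b := by
  induction J generalizing x b with
  | zero =>
    obtain ⟨rfl, rfl⟩ : b = 0 ∧ x = 0 := by omega
    simp [PP, tri_zero, iq_zero]
  | succ J ih =>
    have e : PP (J + 1) = PP J + PowerSeries.X * (PowerSeries.C (qq ^ (J + 1)) * PP J) := by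
      rw [PP_succ]; ring
    have hJ : (1 - qq ^ (J + 1)) * (iq (J + 1) * PowerSeries.coeff x (PP (J + 1))) =
        iq J * PowerSeries.coeff x (PP (J + 1)) := by
      rw [iq_succ J]; ring
    have hne : (1 - qq ^ (J + 1)) ≠ 0 := by
      intro h0
      have := congrArg PowerSeries.constantCoeff h0
      simp at this
    apply mul_left_cancel₀ hne
    rw [hJ, e, map_add, mul_add]
    cases x with
    | zero =>
      obtain rfl : b = J + 1 := by omega
      have := ih J 0 rfl
      rw [this]
      rw [iq_succ J]
      simp [tri_zero, iq_zero]
      ring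
    | succ x =>
      rw [PowerSeries.coeff_succ_X_mul, PowerSeries.coeff_C_mul]
      have h2 := ih b x (by omega)
      cases b with
      | zero =>
        obtain rfl : J = x := by omega
        rw [coeff_PP_of_lt J (J + 1) (by omega)]
        rw [tri_succ]
        rw [iq_zero] at *
        linear_combination qq ^ (J + 1) * h2 + qq ^ (J + 1) * qq ^ tri J * (iq_succ J)
      | succ b =>
        obtain rfl : J = b + x + 1 := by omega
        have h1 := ih b (x + 1) (by omega)
        rw [h1]
        rw [iq_succ x] at h2
        rw [iq_succ b, tri_succ]
        linear_combination qq ^ (b + x + 1 + 1) * h2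

theorem PP_expand (J N : ℕ) (h : J < N) :
    PowerSeries.C (iq J) * PP J = ∑ x ∈ Finset.range N, ∑ b ∈ Finset.range N,
      if J = b + x then PowerSeries.C (qq ^ tri x * iq x * iq b) * PowerSeries.X ^ x else 0 := by
  ext1 n
  rw [PowerSeries.coeff_C_mul]
  simp only [map_sum]
  rcases le_or_gt n J with hn | hn
  · rw [Finset.sum_eq_single n, Finset.sum_eq_single (J - n)]
    · rw [if_pos (by omega), PowerSeries.coeff_C_mul, PowerSeries.coeff_X_pow_self, mul_one]
      exact coeff_PP _ _ _ (by omega)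
    · intro b _ hb
      rw [if_neg (by omega), map_zero]
    · intro hb
      simp at hb; omega
    · intro x _ hx
      apply Finset.sum_eq_zero
      intro b _
      split_ifs
      · rw [PowerSeries.coeff_C_mul, PowerSeries.coeff_X_pow, if_neg (Ne.symm hx), mul_zero]
      · simp
    · intro hb
      simp at hb; omega
  · rw [coeff_PP_of_lt J n hn, mul_zero]
    symm
    apply Finset.sum_eq_zero
    intro x _
    apply Finset.sum_eq_zero
    intro b _
    split_ifs
    · rw [PowerSeries.coeff_C_mul, PowerSeries.coeff_X_pow, if_neg (by omega), mul_zero]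
    · simp

theorem coeff_X_pow_mul_sum (i n N : ℕ) (h : i < N) (r : PowerSeries ℚ)
    (f : PowerSeries (PowerSeries ℚ)) :
    PowerSeries.coeff i (PowerSeries.C r * PowerSeries.X ^ n * f) =
      ∑ a ∈ Finset.range N, if i = a + n then r * PowerSeries.coeff a f else 0 := by
  rw [mul_assoc, PowerSeries.coeff_C_mul, PowerSeries.coeff_X_pow_mul']
  split_ifs with hn
  · rw [Finset.sum_eq_single (i - n)]
    · rw [if_pos (by omega)]
    · intro b _ hb
      rw [if_neg (by omega)]
    · intro hb
      simp at hb; omega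
  · rw [mul_zero]
    symm
    apply Finset.sum_eq_zero
    intro a _
    rw [if_neg (by omega)]

/-- The inner series. -/
noncomputable def MM (m z : ℕ) : PowerSeries (PowerSeries ℚ) :=
  EE m - PowerSeries.C (1 - qq ^ z) * EE (m + 1)

theorem coeff_MM (m z a : ℕ) : PowerSeries.coeff a (MM m z) =
    qq ^ (tri a + m * a) * iq a * (1 - qq ^ a + qq ^ (a + z)) := by
  rw [MM, map_sub, PowerSeries.coeff_C_mul]
  simp only [EE, PowerSeries.coeff_mk]
  ring

theorem MM_eq (J K z : ℕ) : MM (J + K + z) z = PowerSeries.C (qq ^ z) *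
    (1 + PowerSeries.X * PowerSeries.C (qq ^ (J + K + 1))) * EE (J + K + z + 1) := by
  rw [MM, EE_succ (J + K + z)]
  have : PowerSeries.C (qq ^ (J + K + z + 1)) =
    PowerSeries.C (qq ^ z) * PowerSeries.C (qq ^ (J + K + 1)) := by
    rw [← map_mul]; congr 1; ring
  rw [this, map_sub, map_one]
  ring

theorem key_series (j k : ℕ) :
    ∑ z ∈ Finset.range (min j k + 1), PowerSeries.C (qq ^ (tri (j - z + (k - z) + z) + tri (z - 1)) * iq z) *
      ((PowerSeries.C (iq (j - z)) * PP (j - z)) * (PowerSeries.C (iq (k - z)) * PP (k - z)) *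
        MM (j - z + (k - z) + z) z) =
      PowerSeries.C (qq ^ (tri j + tri k) * iq j * iq k) * EE 0 := by
  let φ : PowerSeries (PowerSeries ℚ) →+* FractionRing (PowerSeries (PowerSeries ℚ)) :=
    algebraMap _ _
  have hφ : Function.Injective φ := IsFractionRing.injective _ _
  have hφ0 : ∀ f : PowerSeries (PowerSeries ℚ),
      PowerSeries.constantCoeff (PowerSeries.constantCoeff f) = 1 → φ f ≠ 0 := by
    intro f hf h0
    have : f = 0 := hφ (by rw [h0, map_zero])
    rw [this] at hf
    simp at hf
  obtain ⟨q, hqd⟩ : ∃ q, q = φ (PowerSeries.C qq) := ⟨_, rfl⟩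
  obtain ⟨u, hud⟩ : ∃ u, u = φ (- (PowerSeries.X * PowerSeries.C qq)) := ⟨_, rfl⟩
  have hq : ∀ n : ℕ, 1 - q * q ^ n ≠ 0 := by
    intro n
    have : 1 - q * q ^ n = φ (1 - PowerSeries.C qq * PowerSeries.C qq ^ n) := by
      simp [hqd]
    rw [this]
    apply hφ0
    simp
  have hu : ∀ n : ℕ, 1 - u * q ^ n ≠ 0 := by
    intro n
    have : 1 - u * q ^ n = φ (1 + PowerSeries.X * PowerSeries.C qq * PowerSeries.C qq ^ n) := by
      simp [hqd, hud]
    rw [this]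
    apply hφ0
    simp
  have hpq : ∀ n, pp q q n = φ (PowerSeries.C (qPoch n)) := by
    intro n
    simp only [pp, qPoch, map_prod]
    apply Finset.prod_congr rfl
    intro l _
    simp [hqd, pow_succ']
  have hpu : ∀ n, pp q u n = φ (PP n) := by
    intro n
    simp only [pp, PP, map_prod]
    apply Finset.prod_congr rfl
    intro l _
    simp [hqd, hud, pow_succ', mul_assoc]
  have hiq : ∀ n, φ (PowerSeries.C (iq n)) = (pp q q n)⁻¹ := by
    intro n
    apply eq_inv_of_mul_eq_one_right
    rw [hpq, ← map_mul, ← map_mul, qPoch_iq, map_one, map_one]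
  have hE : ∀ m, φ (EE m) = φ (EE 0) / pp q u m := by
    intro m
    rw [eq_div_iff (pp_ne hu m), hpu, ← map_mul, mul_comm, PP_EE]
  have hCq : ∀ n : ℕ, φ (PowerSeries.C (qq ^ n)) = q ^ n := by
    intro n; simp [hqd]
  apply hφ
  rw [map_sum]
  have main := FF_sum q u hq hu j k
  rw [map_mul, map_mul, map_mul, map_mul, map_mul, hCq, hiq, hiq]
  rw [← mul_one (q ^ (tri j + tri k) * _ * _ * _), ← main, Finset.mul_sum]
  apply Finset.sum_congr rfl
  intro z hz
  obtain ⟨α, rfl⟩ : ∃ α, j = α + z := ⟨j - z, by simp at hz; omega⟩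
  obtain ⟨β, rfl⟩ : ∃ β, k = β + z := ⟨k - z, by simp at hz; omega⟩
  simp only [Nat.add_sub_cancel]
  rw [MM_eq]
  have hu1 : φ (PowerSeries.X * PowerSeries.C (qq ^ (α + β + 1))) = - (u * q ^ (α + β)) := by
    simp [hqd, hud, pow_succ', mul_assoc]
  simp only [map_mul, map_add, map_one]
  rw [map_mul] at hu1
  rw [hu1]
  simp only [hCq, hiq, hE (α + β + z + 1), ← hpu]
  have ex : tri (α + β + z) + tri (z - 1) + z = tri (α + z) + tri (β + z) + α * β := by
    have e1 : tri (z - 1) + z = tri z := by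
      cases z with
      | zero => rfl
      | succ z => rw [tri_succ]; rfl
    rw [add_assoc, e1]
    simp only [tri_add]
    ring
  have ex' : q ^ (tri (α + β + z) + tri (z - 1)) * q ^ z =
      q ^ (tri (α + z) + tri (β + z)) * q ^ (α * β) := by
    rw [← pow_add, ← pow_add, ex]
  rw [FF]
  have n1 := pp_ne hq (α + z)
  have n2 := pp_ne hq (β + z)
  generalize q ^ (tri (α + β + z) + tri (z - 1)) = g1 at *
  generalize q ^ (tri (α + z) + tri (β + z)) = g2 at *
  generalize q ^ (α * β) = g3 at *
  generalize q ^ z = g4 at *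
  rw [show g2 * (pp q q (α + z))⁻¹ * (pp q q (β + z))⁻¹ * φ (EE 0) *
      (g3 * pp q q (α + z) * pp q q (β + z) * pp q u α * pp q u β * (1 - u * q ^ (α + β)) /
        (pp q q α * pp q q β * pp q q z * pp q u (α + β + z + 1))) =
      (g2 * g3) * (pp q q (α + z) * (pp q q (α + z))⁻¹) * (pp q q (β + z) * (pp q q (β + z))⁻¹) *
      φ (EE 0) * pp q u α * pp q u β * (1 - u * q ^ (α + β)) /
        (pp q q α * pp q q β * pp q q z * pp q u (α + β + z + 1)) by ring,
    mul_inv_cancel₀ n1, mul_inv_cancel₀ n2, ← ex']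
  simp only [div_eq_mul_inv, mul_inv]
  ring

end SeriesPart

section Assembly

theorem sum_perm6 {M : Type*} [AddCommMonoid M] (s : Finset ℕ) (f : ℕ → ℕ → ℕ → ℕ → ℕ → ℕ → M) :
    ∑ a ∈ s, ∑ b ∈ s, ∑ c ∈ s, ∑ x ∈ s, ∑ y ∈ s, ∑ z ∈ s, f a b c x y z =
      ∑ z ∈ s, ∑ x ∈ s, ∑ b ∈ s, ∑ y ∈ s, ∑ c ∈ s, ∑ a ∈ s, f a b c x y z := by
  simp only [← Finset.sum_product']
  refine Finset.sum_nbij'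
    (fun p => (p.2.2.2.2.2, p.2.2.2.1, p.2.1, p.2.2.2.2.1, p.2.2.1, p.1))
    (fun p => (p.2.2.2.2.2, p.2.2.1, p.2.2.2.2.1, p.2.1, p.2.2.2.1, p.1)) ?_ ?_ ?_ ?_ ?_
  · simp only [Finset.mem_product]; tauto
  · simp only [Finset.mem_product]; tauto
  · intros; rfl
  · intros; rfl
  · intros; rfl

theorem sum_extend {M : Type*} [AddCommMonoid M] (m N : ℕ) (h : m ≤ N) (f : ℕ → M)
    (hf : ∀ a, m ≤ a → f a = 0) : ∑ a ∈ Finset.range m, f a = ∑ a ∈ Finset.range N, f a := by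
  apply Finset.sum_subset (Finset.range_mono h)
  intro a _ ha
  exact hf a (by simpa using ha)

theorem sum_extend6 {M : Type*} [AddCommMonoid M] (i j k N : ℕ) (hN : N = i + j + k + 1)
    (f : ℕ → ℕ → ℕ → ℕ → ℕ → ℕ → M)
    (hf : ∀ a b c x y z, ¬ (i = a + x + y ∧ j = b + x + z ∧ k = c + y + z) → f a b c x y z = 0) :
    ∑ a ∈ Finset.range (i + 1), ∑ b ∈ Finset.range (j + 1), ∑ c ∈ Finset.range (k + 1),
      ∑ x ∈ Finset.range (i + 1), ∑ y ∈ Finset.range (i + 1), ∑ z ∈ Finset.range (j + 1),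
        f a b c x y z =
    ∑ a ∈ Finset.range N, ∑ b ∈ Finset.range N, ∑ c ∈ Finset.range N,
      ∑ x ∈ Finset.range N, ∑ y ∈ Finset.range N, ∑ z ∈ Finset.range N, f a b c x y z := by
  rw [sum_extend (i + 1) N (by omega)]
  · refine Finset.sum_congr rfl fun a _ => ?_
    rw [sum_extend (j + 1) N (by omega)]
    · refine Finset.sum_congr rfl fun b _ => ?_
      rw [sum_extend (k + 1) N (by omega)]
      · refine Finset.sum_congr rfl fun c _ => ?_
        rw [sum_extend (i + 1) N (by omega)]
        · refine Finset.sum_congr rfl fun x _ => ?_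
          rw [sum_extend (i + 1) N (by omega)]
          · refine Finset.sum_congr rfl fun y _ => ?_
            rw [sum_extend (j + 1) N (by omega)]
            intro z hz
            exact hf _ _ _ _ _ _ (by omega)
          · intro y hy
            exact Finset.sum_eq_zero fun z _ => hf _ _ _ _ _ _ (by omega)
        · intro x hx
          exact Finset.sum_eq_zero fun y _ => Finset.sum_eq_zero fun z _ =>
            hf _ _ _ _ _ _ (by omega)
      · intro c hc
        exact Finset.sum_eq_zero fun x _ => Finset.sum_eq_zero fun y _ =>
          Finset.sum_eq_zero fun z _ => hf _ _ _ _ _ _ (by omega)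
    · intro b hb
      exact Finset.sum_eq_zero fun c _ => Finset.sum_eq_zero fun x _ =>
        Finset.sum_eq_zero fun y _ => Finset.sum_eq_zero fun z _ => hf _ _ _ _ _ _ (by omega)
  · intro a ha
    exact Finset.sum_eq_zero fun b _ => Finset.sum_eq_zero fun c _ => Finset.sum_eq_zero fun x _ =>
      Finset.sum_eq_zero fun y _ => Finset.sum_eq_zero fun z _ => hf _ _ _ _ _ _ (by omega)

theorem coeff_term (i J K z N : ℕ) (hi : i < N) (hJ : J < N) (hK : K < N) :
    PowerSeries.coeff i (PowerSeries.C (qq ^ (tri (J + K + z) + tri (z - 1)) * iq z) *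
      ((PowerSeries.C (iq J) * PP J) * (PowerSeries.C (iq K) * PP K) * MM (J + K + z) z)) =
    ∑ x ∈ Finset.range N, ∑ b ∈ Finset.range N, ∑ y ∈ Finset.range N, ∑ c ∈ Finset.range N,
      ∑ a ∈ Finset.range N, if i = a + x + y ∧ J + z = b + x + z ∧ K + z = c + y + z then
        qq ^ (tri (a + b + c + x + y + z) + tri x + tri y + tri (z - 1)) *
          (1 - qq ^ a + qq ^ (a + z)) * (iq a * iq b * iq c * iq x * iq y * iq z) else 0 := by
  rw [PP_expand J N hJ, PP_expand K N hK, Finset.sum_mul_sum, Finset.sum_mul, Finset.mul_sum,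
    map_sum]
  refine Finset.sum_congr rfl fun x _ => ?_
  simp only [Finset.sum_mul_sum, Finset.sum_mul, Finset.mul_sum, map_sum]
  rw [Finset.sum_congr rfl fun y _ => Finset.sum_comm, Finset.sum_comm]
  refine Finset.sum_congr rfl fun b _ => ?_
  refine Finset.sum_congr rfl fun y _ => ?_
  refine Finset.sum_congr rfl fun c _ => ?_
  by_cases h1 : J = b + x
  · by_cases h2 : K = c + y
    · rw [if_pos h1, if_pos h2]
      have e : ∀ r1 r2 r3 : PowerSeries ℚ, ∀ f : PowerSeries (PowerSeries ℚ),
          PowerSeries.C r1 * (PowerSeries.C r2 * PowerSeries.X ^ x *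
            (PowerSeries.C r3 * PowerSeries.X ^ y) * f) =
          PowerSeries.C (r1 * r2 * r3) * PowerSeries.X ^ (x + y) * f := by
        intro r1 r2 r3 f
        simp only [map_mul]; ring
      rw [e, coeff_X_pow_mul_sum i (x + y) N hi]
      refine Finset.sum_congr rfl fun a _ => ?_
      by_cases h3 : i = a + x + y
      · rw [if_pos (by omega), if_pos (by omega), coeff_MM]
        have e2 : a + b + c + x + y + z = a + (J + K + z) := by omega
        rw [e2, tri_add a]
        ring
      · rw [if_neg (by omega), if_neg (by omega)]
    · rw [if_neg h2, mul_zero, zero_mul, mul_zero, map_zero]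
      symm
      exact Finset.sum_eq_zero fun a _ => if_neg (by omega)
  · rw [if_neg h1, zero_mul, zero_mul, mul_zero, map_zero]
    symm
    exact Finset.sum_eq_zero fun a _ => if_neg (by omega)

end Assembly

/-- The three parameter key identity for Göllnitz's theorem
(Alladi--Andrews--Gordon): for nonnegative integers `i, j, k`,
`∑ q^{T_s+T_{ab}+T_{ac}+T_{bc-1}} (1 - q^a + q^{a+bc}) / ((q)_a (q)_b (q)_c (q)_{ab} (q)_{ac} (q)_{bc})
  = q^{T_i+T_j+T_k} / ((q)_i (q)_j (q)_k)`,
summed over nonnegative `a, b, c, ab, ac, bc` with `i = a+ab+ac`, `j = b+ab+bc`,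
`k = c+ac+bc`, where `s = a+b+c+ab+ac+bc`. -/
theorem alladi_andrews_gordon_key_identity (i j k : ℕ) :
    (∑ a ∈ Finset.range (i + 1), ∑ b ∈ Finset.range (j + 1),
      ∑ c ∈ Finset.range (k + 1), ∑ ab ∈ Finset.range (i + 1),
      ∑ ac ∈ Finset.range (i + 1), ∑ bc ∈ Finset.range (j + 1),
        if i = a + ab + ac ∧ j = b + ab + bc ∧ k = c + ac + bc then
          (PowerSeries.X : PowerSeries ℚ) ^
              (tri (a + b + c + ab + ac + bc) + tri ab + tri ac + tri (bc - 1)) *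
            (1 - (PowerSeries.X : PowerSeries ℚ) ^ a +
              (PowerSeries.X : PowerSeries ℚ) ^ (a + bc)) *
            (qPoch a * qPoch b * qPoch c * qPoch ab * qPoch ac * qPoch bc)⁻¹
        else 0)
    = (PowerSeries.X : PowerSeries ℚ) ^ (tri i + tri j + tri k) *
        (qPoch i * qPoch j * qPoch k)⁻¹ := by
  rw [sum_extend6 i j k (i + j + k + 1) rfl _ (fun a b c x y z h => if_neg h), sum_perm6,
    iq_mul3]
  simp only [iq_mul6]
  have hk := congrArg (PowerSeries.coeff i) (key_series j k)
  rw [map_sum, PowerSeries.coeff_C_mul] at hk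
  simp only [EE, PowerSeries.coeff_mk, zero_mul, add_zero] at hk
  rw [← sum_extend (min j k + 1) (i + j + k + 1) (by omega)]
  · refine Eq.trans (Finset.sum_congr rfl fun z hz => ?_) (hk.trans ?_)
    · obtain ⟨α, rfl⟩ : ∃ α, j = α + z := ⟨j - z, by simp at hz; omega⟩
      obtain ⟨β, rfl⟩ : ∃ β, k = β + z := ⟨k - z, by simp at hz; omega⟩
      simp only [Nat.add_sub_cancel]
      exact (coeff_term i α β z _ (by omega) (by omega) (by omega)).symm
    · ring
  · intro z hz
    exact Finset.sum_eq_zero fun x _ => Finset.sum_eq_zero fun b _ => Finset.sum_eq_zero fun y _ =>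
      Finset.sum_eq_zero fun c _ => Finset.sum_eq_zero fun a _ => if_neg (by omega)
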